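/- Let d ≥ 1 and N ≥ 2 be integers, let η be a distortion function and let 0 < α < d. Then there exists m_0 ∈ ℕ such that for every m ≥ m_0 the following holds: for every (N,m)-fat Cantor set F ⊆ [0,1]^d with construction families (𝓕_n), every metric space Y, every η-quasisymmetry f : F → Y, every n ∈ ℕ and every Q_0 ∈ 𝓕_n, one has |f(Q_0)|^α ≤ ∑_{Q ∈ 𝓕_{n+1}(Q_0)} |f(Q)|^α, where f(Q) denotes f(Q ∩ F) and |·| denotes diameter. -/

import Mathlib

open Set Metric MeasureTheory ProbabilityTheory Filter
open scoped ENNReal NNReal Classical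

noncomputable section

/-- A distortion function: a homeomorphism of `[0,∞)` onto itself
(equivalently, a continuous strictly increasing surjection of `[0,∞)` with `η 0 = 0`). -/
def IsDistortion (η : ℝ → ℝ) : Prop :=
  ContinuousOn η (Set.Ici 0) ∧ StrictMonoOn η (Set.Ici 0) ∧ η 0 = 0 ∧
    Set.SurjOn η (Set.Ici 0) (Set.Ici 0)

/-- `f` is an `η`-quasisymmetry on the set `E`:
it is injective on `E` and satisfies the quasisymmetry inequality on points of `E`. -/
def IsQSOn {X Y : Type*} [MetricSpace X] [MetricSpace Y] (η : ℝ → ℝ) (f : X → Y)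
    (E : Set X) : Prop :=
  Set.InjOn f E ∧ ∀ x ∈ E, ∀ y ∈ E, ∀ z ∈ E, x ≠ z →
    dist (f x) (f y) ≤ η (dist x y / dist x z) * dist (f x) (f z)

/-- `f` is a `β`-power quasisymmetry on `E`: an `η`-quasisymmetry with
`η t = C * max (t ^ β) (t ^ (1 / β))` for some `C > 0`. -/
def IsPowerQSOn {X Y : Type*} [MetricSpace X] [MetricSpace Y] (β : ℝ) (f : X → Y)
    (E : Set X) : Prop :=
  ∃ C : ℝ, 0 < C ∧ IsQSOn (fun t => C * max (t ^ β) (t ^ (1 / β))) f E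

/-- Distance between two sets: `inf {dist a b : a ∈ A, b ∈ B}`. -/
def setDist {X : Type*} [MetricSpace X] (A B : Set X) : ℝ :=
  sInf (Set.image2 dist A B)

/-- The closed axis-parallel cube with lower corner `c` and side length `l`. -/
def cube {d : ℕ} (c : Fin d → ℝ) (l : ℝ) : Set (EuclideanSpace ℝ (Fin d)) :=
  {x | ∀ i, c i ≤ x i ∧ x i ≤ c i + l}

/-- Lower corner of the subcube with address `a` when the cube with lower corner `c` and
side `l` is divided into `K ^ d` congruent subcubes. -/
def childCorner {d : ℕ} (c : Fin d → ℝ) (l : ℝ) (K : ℕ) (a : Fin d → Fin K) : Fin d → ℝ :=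
  fun i => c i + l / K * (a i : ℝ)

/-- Side length `N ^ (-m*n)` of level-`n` cubes in the `(N,m)`-fat Cantor construction. -/
def fatSide (N m n : ℕ) : ℝ := ((N : ℝ) ^ (m * n))⁻¹

/-- `𝓕` is the sequence of families of cubes of an `(N,m)`-fat Cantor construction in `[0,1]^d`:
`𝓕 0 = {[0,1]^d}`, and each cube `Q ∈ 𝓕 n` is divided into `N^(m*d)` congruent subcubes of which
exactly one is removed, `𝓕 (n+1)` consisting of all retained subcubes. -/
def IsFatCantorFamilies (d N m : ℕ) (𝓕 : ℕ → Set (Set (EuclideanSpace ℝ (Fin d)))) : Prop :=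
  𝓕 0 = {cube (fun _ => 0) 1} ∧
  (∀ n, ∀ Q ∈ 𝓕 n, ∃ c : Fin d → ℝ, Q = cube c (fatSide N m n) ∧
    ∃ a₀ : Fin d → Fin (N ^ m),
      {Q' ∈ 𝓕 (n + 1) | Q' ⊆ Q} =
        {Q' | ∃ a : Fin d → Fin (N ^ m), a ≠ a₀ ∧
          Q' = cube (childCorner c (fatSide N m n) (N ^ m) a) (fatSide N m (n + 1))}) ∧
  (∀ n, ∀ Q' ∈ 𝓕 (n + 1), ∃ Q ∈ 𝓕 n, Q' ⊆ Q)

/-- `F` is an `(N,m)`-fat Cantor set in `[0,1]^d`. -/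
def IsFatCantorSet (d N m : ℕ) (F : Set (EuclideanSpace ℝ (Fin d))) : Prop :=
  ∃ 𝓕, IsFatCantorFamilies d N m 𝓕 ∧ F = ⋂ n, ⋃₀ 𝓕 n

/-- Side length `∏_{m=1}^n (N m)⁻¹` of level-`n` cubes of a dense-Cantor construction with
subdivision sequence `N`. -/
def denseSide (N : ℕ → ℕ) (n : ℕ) : ℝ := ∏ m ∈ Finset.Icc 1 n, ((N m : ℝ))⁻¹

/-- `𝓔` is the sequence of families of cubes of a dense-Cantor construction in `[0,1]^d`
with subdivision sequence `N`: `𝓔 0 = {[0,1]^d}`, every cube of `𝓔 (n+1)` is one of the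
`(N (n+1))^d` congruent subcubes of a cube of `𝓔 n`, and every cube of `𝓔 n` has at least one
retained subcube in `𝓔 (n+1)`. -/
def IsDenseCantorFamilies (d : ℕ) (N : ℕ → ℕ)
    (𝓔 : ℕ → Set (Set (EuclideanSpace ℝ (Fin d)))) : Prop :=
  𝓔 0 = {cube (fun _ => 0) 1} ∧
  (∀ n, ∀ Q' ∈ 𝓔 (n + 1), ∃ Q ∈ 𝓔 n, Q' ⊆ Q ∧ ∃ c : Fin d → ℝ, Q = cube c (denseSide N n) ∧
      ∃ a : Fin d → Fin (N (n + 1)),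
        Q' = cube (childCorner c (denseSide N n) (N (n + 1)) a) (denseSide N (n + 1))) ∧
  (∀ n, ∀ Q ∈ 𝓔 n, ∃ Q' ∈ 𝓔 (n + 1), Q' ⊆ Q)

/-- A (possibly degenerate) line segment parallel to the `d`-th coordinate direction
(the kernel of the projection to the first `d-1` coordinates). -/
def IsVerticalSeg {d : ℕ} (A : Set (EuclideanSpace ℝ (Fin d))) : Prop :=
  ∃ x y : EuclideanSpace ℝ (Fin d), A = segment ℝ x y ∧
    ∀ i : Fin d, (i : ℕ) < d - 1 → x i = y i

/-- The dense-Cantor construction `𝓔` is `(Δ_n)_n`-dense: for all sufficiently large `n` and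
every `Q ∈ 𝓔 n`, every vertical line segment contained in `Q \ ⋃ 𝓔 (n+1)` has diameter at most
`Δ (n+1) * diam Q`. -/
def IsDeltaDense {d : ℕ} (Δ : ℕ → ℝ) (𝓔 : ℕ → Set (Set (EuclideanSpace ℝ (Fin d)))) : Prop :=
  ∃ n₀ : ℕ, ∀ n, n₀ ≤ n → ∀ Q ∈ 𝓔 n, ∀ A : Set (EuclideanSpace ℝ (Fin d)),
    IsVerticalSeg A → A ⊆ Q \ ⋃₀ 𝓔 (n + 1) →
      Metric.diam A ≤ Δ (n + 1) * Metric.diam Q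

/-- The dyadic cube of level `k` in `[0,1]^d` with address `a`. -/
def dyCube (d k : ℕ) (a : Fin d → Fin (2 ^ k)) : Set (EuclideanSpace ℝ (Fin d)) :=
  cube (fun i => (a i : ℝ) / 2 ^ k) (((2 : ℝ) ^ k)⁻¹)

/-- Lower corner of the level-`n` `N`-adic cube of `[0,1]^d` with address word `w`. -/
def fatCorner (d N : ℕ) {n : ℕ} (w : Fin n → Fin d → Fin N) : Fin d → ℝ :=
  fun i => ∑ j : Fin n, ((N : ℝ) ^ (j.val + 1))⁻¹ * (w j i : ℝ)

/-- In fractal percolation with retention coins `X`, the cube with address word `w` survives if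
all of its ancestors (including itself) are retained. -/
def FatSurvives {Ω : Type*} {d N : ℕ} (X : ∀ n : ℕ, (Fin n → Fin d → Fin N) → Ω → Bool)
    (ω : Ω) {n : ℕ} (w : Fin n → Fin d → Fin N) : Prop :=
  ∀ m : ℕ, ∀ h : m ≤ n, 1 ≤ m → X m (fun j => w (Fin.castLE h j)) ω = true

/-- The fractal percolation limit set determined by the retention coins `X` at sample `ω`:
the intersection over `n` of the unions of surviving level-`n` `N`-adic cubes. -/
def fatPerc {Ω : Type*} (d N : ℕ) (X : ∀ n : ℕ, (Fin n → Fin d → Fin N) → Ω → Bool)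
    (ω : Ω) : Set (EuclideanSpace ℝ (Fin d)) :=
  ⋂ n : ℕ, ⋃ w : Fin n → Fin d → Fin N, ⋃ (_ : FatSurvives X ω w),
    cube (fatCorner d N w) (((N : ℝ) ^ n)⁻¹)

/-- Lower corner of the level-`n` cube with address word `w` in the subdivision scheme where the
level-`j` cubes have side `denseSide N j`. -/
def denseCorner (d : ℕ) (N : ℕ → ℕ) {n : ℕ}
    (w : (j : Fin n) → Fin d → Fin (N (j.val + 1))) : Fin d → ℝ :=
  fun i => ∑ j : Fin n, denseSide N (j.val + 1) * (w j i : ℝ)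

/-- Survival of the cube with address word `w` in dense fractal percolation with coins `X`. -/
def DenseSurvives {Ω : Type*} {d : ℕ} {N : ℕ → ℕ}
    (X : ∀ n : ℕ, ((j : Fin n) → Fin d → Fin (N (j.val + 1))) → Ω → Bool) (ω : Ω) {n : ℕ}
    (w : (j : Fin n) → Fin d → Fin (N (j.val + 1))) : Prop :=
  ∀ m : ℕ, ∀ h : m ≤ n, 1 ≤ m → X m (fun j => w (Fin.castLE h j)) ω = true

/-- The dense fractal percolation limit set determined by the retention coins `X` at `ω`. -/
def densePerc {Ω : Type*} (d : ℕ) (N : ℕ → ℕ)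
    (X : ∀ n : ℕ, ((j : Fin n) → Fin d → Fin (N (j.val + 1))) → Ω → Bool) (ω : Ω) :
    Set (EuclideanSpace ℝ (Fin d)) :=
  ⋂ n : ℕ, ⋃ w : (j : Fin n) → Fin d → Fin (N (j.val + 1)), ⋃ (_ : DenseSurvives X ω w),
    cube (denseCorner d N w) (denseSide N n)

/-- The function `g_N (s) = 1 - (1-s)^N - N s (1-s)^(N-1) + N^(-5)`. -/
def gFun (N : ℕ) (s : ℝ) : ℝ :=
  1 - (1 - s) ^ N - N * s * (1 - s) ^ (N - 1) + ((N : ℝ) ^ 5)⁻¹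

end

/-!
A line of subcubes crossing `Q₀` in a coordinate direction joins two points at distance comparable
to the side of `Q₀`. If the removed subcube lies on the line, one of its neighbours replaces it, and
consecutive subcubes stay close on their own scale. Quasisymmetry and the triangle inequality then
bound `|f Q₀|` by a constant times the sum of `|f Q|` over the line. Hölder's inequality on each of
the `N ^ (m * (d - 1))` parallel lines turns this into `|f Q₀| ^ d ≤ C * ∑ |f Q| ^ d`, where `C`
depends on `η` and `d` but not on `m`. Since also `|f Q| ≤ η (4 * √d / N ^ m) * |f Q₀|`, lowering
the exponent from `d` to `α` gains the factor `η (4 * √d / N ^ m) ^ (d - α)`, which absorbs `C` once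
`m` is large.
-/

open scoped Topology

section Sums

variable {ι β : Type*} [Fintype β]

lemma sum_sum_update {M : Type*} [AddCommMonoid M] [Fintype ι] [DecidableEq ι]
    (i : ι) (G : (ι → β) → M) :
    ∑ a, ∑ b, G (Function.update a i b) = Fintype.card β • ∑ a, G a := by
  have swap_involutive : Function.Involutive
      fun p : (ι → β) × β ↦ (Function.update p.1 i p.2, p.1 i) := fun p ↦ by simp
  calc ∑ a, ∑ b, G (Function.update a i b)
      = ∑ p : (ι → β) × β, G (Function.update p.1 i p.2) :=
        (Fintype.sum_prod_type' fun a b ↦ G (Function.update a i b)).symm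
    _ = ∑ p : (ι → β) × β, G p.1 := Equiv.sum_comp swap_involutive.toPerm fun p ↦ G p.1
    _ = Fintype.card β • ∑ a, G a := by
      rw [Fintype.sum_prod_type_right]
      simp

lemma tsum_image_compl_singleton {γ M : Type*} [AddCommMonoid M] [TopologicalSpace M]
    [DecidableEq β] {g : β → γ} (hg : Function.Injective g) (b₀ : β) (φ : γ → M) :
    ∑' c : g '' {b₀}ᶜ, φ c = ∑ b ∈ Finset.univ.erase b₀, φ (g b) := by
  rw [tsum_image φ hg.injOn, ← Finset.tsum_subtype', Finset.coe_erase, Finset.coe_univ,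
    compl_eq_univ_sdiff]

/-- Summing Hölder's inequality over the lines in direction `i`. -/
lemma pow_card_le_mul_sum_pow_of_le_sum_update [Fintype ι] [DecidableEq ι] [Nonempty β]
    (i : ι) {G : (ι → β) → ℝ} (hG : ∀ a, 0 ≤ G a) {D A : ℝ} (hD : 0 ≤ D) (hA : 0 ≤ A)
    (h : ∀ a, D ≤ A * ∑ b, G (Function.update a i b)) :
    D ^ Fintype.card ι ≤ A ^ Fintype.card ι * ∑ a, G a ^ Fintype.card ι := by
  have : Nonempty ι := ⟨i⟩
  obtain ⟨n, hn⟩ := Nat.exists_eq_succ_of_ne_zero (Fintype.card_ne_zero (α := ι))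
  rw [hn, Nat.succ_eq_add_one]
  set k : ℝ := (Fintype.card β : ℝ)
  have hk : 0 < k := by simp [k, Fintype.card_pos]
  have line (a : ι → β) :
      D ^ (n + 1) ≤ A ^ (n + 1) * (k ^ n * ∑ b, G (Function.update a i b) ^ (n + 1)) := by
    have holder := pow_sum_div_card_le_sum_pow (s := Finset.univ)
      (f := fun b ↦ G (Function.update a i b)) (fun _ _ ↦ hG _) n
    rw [Finset.card_univ, div_le_iff₀' (by positivity)] at holder
    calc D ^ (n + 1) ≤ (A * ∑ b, G (Function.update a i b)) ^ (n + 1) := by gcongr; exact h a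
      _ = A ^ (n + 1) * (∑ b, G (Function.update a i b)) ^ (n + 1) := mul_pow ..
      _ ≤ _ := by gcongr
  refine le_of_mul_le_mul_left ?_ (pow_pos hk (n + 1))
  calc k ^ (n + 1) * D ^ (n + 1) = ∑ _a : ι → β, D ^ (n + 1) := by simp [hn, k]
    _ ≤ ∑ a, A ^ (n + 1) * (k ^ n * ∑ b, G (Function.update a i b) ^ (n + 1)) :=
      Finset.sum_le_sum fun a _ ↦ line a
    _ = A ^ (n + 1) * (k ^ n * (k * ∑ a, G a ^ (n + 1))) := by
      rw [← Finset.mul_sum, ← Finset.mul_sum, sum_sum_update i fun a ↦ G a ^ (n + 1),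
        nsmul_eq_mul]
    _ = k ^ (n + 1) * (A ^ (n + 1) * ∑ a, G a ^ (n + 1)) := by ring

lemma rpow_le_sum_rpow_of_le_mul_sum_rpow {s : Finset ι} {ρ : ι → ℝ} {D B ε α γ : ℝ}
    (hD : 0 < D) (hB : 0 ≤ B) (hε : 0 ≤ ε) (hαγ : α ≤ γ) (hρ : ∀ a ∈ s, 0 < ρ a)
    (hρD : ∀ a ∈ s, ρ a ≤ ε * D) (hsum : D ^ γ ≤ B * ∑ a ∈ s, ρ a ^ γ)
    (hsmall : B * ε ^ (γ - α) ≤ 1) :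
    D ^ α ≤ ∑ a ∈ s, ρ a ^ α := by
  have hγα : 0 ≤ γ - α := sub_nonneg.2 hαγ
  have term_le : ∀ a ∈ s, ρ a ^ γ ≤ (ε * D) ^ (γ - α) * ρ a ^ α := fun a ha ↦ by
    calc ρ a ^ γ = ρ a ^ (γ - α) * ρ a ^ α := by
          rw [← Real.rpow_add (hρ a ha), sub_add_cancel]
      _ ≤ _ := mul_le_mul_of_nonneg_right
          (Real.rpow_le_rpow (hρ a ha).le (hρD a ha) hγα) (Real.rpow_nonneg (hρ a ha).le _)
  have hS : 0 ≤ ∑ a ∈ s, ρ a ^ α :=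
    Finset.sum_nonneg fun a ha ↦ Real.rpow_nonneg (hρ a ha).le _
  refine le_of_mul_le_mul_left ?_ (Real.rpow_pos_of_pos hD (γ - α))
  calc D ^ (γ - α) * D ^ α = D ^ γ := by rw [← Real.rpow_add hD, sub_add_cancel]
    _ ≤ B * ∑ a ∈ s, ρ a ^ γ := hsum
    _ ≤ B * ((ε * D) ^ (γ - α) * ∑ a ∈ s, ρ a ^ α) := by
      rw [Finset.mul_sum s _ ((ε * D) ^ (γ - α))]
      exact mul_le_mul_of_nonneg_left (Finset.sum_le_sum term_le) hB
    _ = B * ε ^ (γ - α) * (D ^ (γ - α) * ∑ a ∈ s, ρ a ^ α) := by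
      rw [Real.mul_rpow hε hD.le]
      ring
    _ ≤ 1 * (D ^ (γ - α) * ∑ a ∈ s, ρ a ^ α) := by gcongr
    _ = D ^ (γ - α) * ∑ a ∈ s, ρ a ^ α := one_mul _

end Sums

lemma dist_le_sum_of_dist_succ_le {X : Type*} [PseudoMetricSpace X] {K : ℕ} {q : Fin K → X}
    {ρ : Fin K → ℝ} (hρ : ∀ j, 0 ≤ ρ j)
    (h : ∀ j k : Fin K, (j : ℕ) + 1 = k → dist (q j) (q k) ≤ ρ j) {j k : Fin K} (hjk : j ≤ k) :
    dist (q j) (q k) ≤ ∑ i, ρ i := by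
  let q' (i : ℕ) : X := if hi : i < K then q ⟨i, hi⟩ else q j
  let ρ' (i : ℕ) : ℝ := if hi : i < K then ρ ⟨i, hi⟩ else 0
  have hρ' (i : ℕ) : 0 ≤ ρ' i := by
    unfold ρ'
    split_ifs
    exacts [hρ _, le_rfl]
  have dist_succ_le {i : ℕ} (_ : (j : ℕ) ≤ i) (hik : i < k) : dist (q' i) (q' (i + 1)) ≤ ρ' i := by
    have hi : i + 1 < K := by omega
    simpa [q', ρ', hi, (Nat.lt_succ_self i).trans hi] using h ⟨i, _⟩ ⟨i + 1, hi⟩ rfl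
  calc dist (q j) (q k) = dist (q' j) (q' k) := by simp [q']
    _ ≤ ∑ i ∈ Finset.Ico (j : ℕ) k, ρ' i := dist_le_Ico_sum_of_dist_le hjk dist_succ_le
    _ ≤ ∑ i ∈ Finset.range K, ρ' i :=
      Finset.sum_le_sum_of_subset_of_nonneg
        (fun i hi ↦ Finset.mem_range.2 ((Finset.mem_Ico.1 hi).2.trans k.2)) fun _ _ _ ↦ hρ' _
    _ = ∑ i, ρ i := by simp [Finset.sum_range, ρ']

section Spread

variable {X : Type*} [PseudoMetricSpace X]

/-- `A` is not contained in any open ball of radius `r`. Small sets lying in `A` then have, at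
each of their points, a point of `A` at distance at least `r` to compare with. -/
def IsSpread (r : ℝ) (A : Set X) : Prop :=
  ∀ x, ∃ z ∈ A, r ≤ dist x z

lemma isSpread_of_two_mul_le_dist {r : ℝ} {A : Set X} {x z : X} (hx : x ∈ A) (hz : z ∈ A)
    (h : 2 * r ≤ dist x z) : IsSpread r A := fun y ↦ by
  by_contra! hnear
  linarith [hnear x hx, hnear z hz, dist_triangle_left x z y]

lemma IsSpread.nonempty [Nonempty X] {r : ℝ} {A : Set X} (hA : IsSpread r A) : A.Nonempty :=
  let ⟨z, hz, _⟩ := hA (Classical.arbitrary X)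
  ⟨z, hz⟩

lemma IsSpread.nontrivial [Nonempty X] {r : ℝ} (hr : 0 < r) {A : Set X} (hA : IsSpread r A) :
    A.Nontrivial := by
  obtain ⟨x, hx⟩ := hA.nonempty
  obtain ⟨z, hz, hxz⟩ := hA x
  refine ⟨x, hx, z, hz, ?_⟩
  rintro rfl
  exact (hr.trans_le hxz).ne' (dist_self x)

end Spread

section Quasisymmetry

variable {X Y : Type*} [MetricSpace X] [MetricSpace Y] {η : ℝ → ℝ} {f : X → Y} {F : Set X}

namespace IsQSOn

lemma nonneg (hf : IsQSOn η f F) (hη : MonotoneOn η (Ici 0)) (hF : F.Nontrivial) {t : ℝ}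
    (ht : 0 ≤ t) : 0 ≤ η t := by
  obtain ⟨x, hx, z, hz, hxz⟩ := hF
  have h := hf.2 x hx x hx z hz hxz
  rw [dist_self, dist_self, zero_div] at h
  have hη0 : 0 ≤ η 0 := nonneg_of_mul_nonneg_left h (dist_pos.2 (hf.1.ne hx hz hxz))
  exact hη0.trans (hη self_mem_Ici ht ht)

lemma dist_le (hf : IsQSOn η f F) (hη : MonotoneOn η (Ici 0)) {x y z : X} (hx : x ∈ F)
    (hy : y ∈ F) (hz : z ∈ F) {r R : ℝ} (hr : 0 < r) (hxz : r ≤ dist x z) (hxy : dist x y ≤ R) :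
    dist (f x) (f y) ≤ η (R / r) * dist (f x) (f z) := by
  have hR : 0 ≤ R := dist_nonneg.trans hxy
  calc dist (f x) (f y) ≤ η (dist x y / dist x z) * dist (f x) (f z) :=
        hf.2 x hx y hy z hz (dist_pos.1 (hr.trans_le hxz))
    _ ≤ η (R / r) * dist (f x) (f z) := mul_le_mul_of_nonneg_right
        (hη (div_nonneg dist_nonneg dist_nonneg) (div_nonneg hR hr.le)
          (div_le_div₀ hR hxy hr hxz)) dist_nonneg

lemma isBounded_image (hf : IsQSOn η f F) (hη : MonotoneOn η (Ici 0)) {A : Set X} (hAF : A ⊆ F)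
    (hA : Bornology.IsBounded A) : Bornology.IsBounded (f '' A) := by
  obtain hsub | ⟨x, hx, z, hz, hxz⟩ := A.subsingleton_or_nontrivial
  · exact (hsub.image f).finite.isBounded
  · rw [Metric.isBounded_iff_subset_closedBall (f x)]
    refine ⟨η (Metric.diam A / dist x z) * dist (f x) (f z), ?_⟩
    rintro _ ⟨y, hy, rfl⟩
    rw [mem_closedBall']
    exact hf.dist_le hη (hAF hx) (hAF hy) (hAF hz) (dist_pos.2 hxz) le_rfl
      (Metric.dist_le_diam_of_mem hA hx hy)

lemma diam_image_pos (hf : IsQSOn η f F) (hη : MonotoneOn η (Ici 0)) {A : Set X} (hAF : A ⊆ F)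
    (hA : Bornology.IsBounded A) (hne : A.Nontrivial) : 0 < Metric.diam (f '' A) :=
  Metric.diam_pos (hne.image_of_injOn (hf.1.mono hAF)) (hf.isBounded_image hη hAF hA)

lemma dist_le_mul_diam_image (hf : IsQSOn η f F) (hη : MonotoneOn η (Ici 0)) {B : Set X}
    (hBF : B ⊆ F) (hB : Bornology.IsBounded B) {r R : ℝ} (hr : 0 < r) (hBr : IsSpread r B)
    {x y : X} (hx : x ∈ B) (hy : y ∈ F) (hxy : dist x y ≤ R) :
    dist (f x) (f y) ≤ η (R / r) * Metric.diam (f '' B) := by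
  obtain ⟨z, hz, hxz⟩ := hBr x
  have hF : F.Nontrivial := ⟨x, hBF hx, z, hBF hz, dist_pos.1 (hr.trans_le hxz)⟩
  have hηRr := hf.nonneg hη hF (div_nonneg (dist_nonneg.trans hxy) hr.le)
  calc dist (f x) (f y) ≤ η (R / r) * dist (f x) (f z) :=
        hf.dist_le hη (hBF hx) hy (hBF hz) hr hxz hxy
    _ ≤ η (R / r) * Metric.diam (f '' B) := by
        gcongr
        exact Metric.dist_le_diam_of_mem (hf.isBounded_image hη hBF hB)
          (mem_image_of_mem f hx) (mem_image_of_mem f hz)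

lemma diam_image_le_mul_diam_image [Nonempty X] (hf : IsQSOn η f F) (hη : MonotoneOn η (Ici 0))
    {A B : Set X} (hAB : A ⊆ B) (hBF : B ⊆ F) (hB : Bornology.IsBounded B) {r R : ℝ}
    (hr : 0 < r) (hR : 0 ≤ R) (hBr : IsSpread r B) (hA : ∀ x ∈ A, ∀ y ∈ A, dist x y ≤ R) :
    Metric.diam (f '' A) ≤ η (R / r) * Metric.diam (f '' B) := by
  have hηRr := hf.nonneg hη ((hBr.nontrivial hr).mono hBF) (div_nonneg hR hr.le)
  apply Metric.diam_le_of_forall_dist_le (mul_nonneg hηRr Metric.diam_nonneg)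
  rintro _ ⟨x, hx, rfl⟩ _ ⟨y, hy, rfl⟩
  exact hf.dist_le_mul_diam_image hη hBF hB hr hBr (hAB hx) (hBF (hAB hy)) (hA x hx y hy)

lemma diam_image_le_two_mul_dist (hf : IsQSOn η f F) (hη : MonotoneOn η (Ici 0)) {A : Set X}
    (hAF : A ⊆ F) {x z : X} (hx : x ∈ F) (hz : z ∈ F) {r R : ℝ} (hr : 0 < r) (hR : 0 ≤ R)
    (hxz : r ≤ dist x z) (hA : ∀ y ∈ A, dist x y ≤ R) :
    Metric.diam (f '' A) ≤ 2 * η (R / r) * dist (f x) (f z) := by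
  have hηRr := hf.nonneg hη ⟨x, hx, z, hz, dist_pos.1 (hr.trans_le hxz)⟩ (div_nonneg hR hr.le)
  have dist_le_of_mem (y : X) (hy : y ∈ A) :
      dist (f x) (f y) ≤ η (R / r) * dist (f x) (f z) :=
    hf.dist_le hη hx (hAF hy) hz hr hxz (hA y hy)
  apply Metric.diam_le_of_forall_dist_le (by positivity)
  rintro _ ⟨y, hy, rfl⟩ _ ⟨y', hy', rfl⟩
  linarith [dist_le_of_mem y hy, dist_le_of_mem y' hy', dist_triangle_left (f y) (f y') (f x)]

end IsQSOn

end Quasisymmetry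

section Addresses

/-- `g` moves the removed address `a₀` to a neighbouring address and fixes all other addresses.
Composing with `g` lets a line of subcubes bypass the removed one. -/
structure IsDetour {ι : Type*} {K : ℕ} (a₀ : ι → Fin K) (g : (ι → Fin K) → ι → Fin K) :
    Prop where
  ne : ∀ a, g a ≠ a₀
  eq_self : ∀ a, a ≠ a₀ → g a = a
  abs_sub_le_one : ∀ a i, |(g a i : ℝ) - a i| ≤ 1

variable {ι : Type*} {K : ℕ} {a₀ : ι → Fin K}

lemma exists_ne_abs_sub_le_one (hK : 2 ≤ K) (j : Fin K) :
    ∃ k : Fin K, k ≠ j ∧ |(k : ℝ) - j| ≤ 1 := by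
  obtain ⟨j, hj⟩ := j
  cases j with
  | zero => exact ⟨⟨1, hK⟩, by simp, by simp⟩
  | succ j => exact ⟨⟨j, (Nat.lt_succ_self j).trans hj⟩, by simp, by simp⟩

lemma exists_isDetour [Nonempty ι] (hK : 2 ≤ K) (a₀ : ι → Fin K) : ∃ g, IsDetour a₀ g := by
  classical
  obtain ⟨i⟩ := ‹Nonempty ι›
  obtain ⟨k, hk, hk_near⟩ := exists_ne_abs_sub_le_one hK (a₀ i)
  refine ⟨Function.update id a₀ (Function.update a₀ i k), fun a ↦ ?_, fun a ha ↦ ?_,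
    fun a j ↦ ?_⟩
  · obtain rfl | ha := eq_or_ne a a₀
    · simpa using hk
    · simp [ha]
  · simp [ha]
  · obtain rfl | ha := eq_or_ne a a₀
    · obtain rfl | hj := eq_or_ne j i
      · simpa using hk_near
      · simp [hj]
    · simp [ha]

lemma IsDetour.sum_comp_le [Fintype ι] [DecidableEq ι] {g : (ι → Fin K) → ι → Fin K}
    (hg : IsDetour a₀ g) {G : (ι → Fin K) → ℝ} (hG : ∀ a, 0 ≤ G a) :
    ∑ a, G (g a) ≤ 2 * ∑ a ∈ Finset.univ.erase a₀, G a := by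
  rw [← Finset.add_sum_erase _ _ (Finset.mem_univ a₀), two_mul]
  gcongr with a ha
  · exact Finset.single_le_sum (fun a _ ↦ hG a) (by simp [hg.ne])
  · rw [hg.eq_self a (Finset.ne_of_mem_erase ha)]

end Addresses

section Cubes

variable {d : ℕ}

lemma dist_le_sqrt_mul_of_forall_abs_sub_le {x y : EuclideanSpace ℝ (Fin d)} {t : ℝ}
    (ht : 0 ≤ t) (h : ∀ i, |x i - y i| ≤ t) : dist x y ≤ √d * t := by
  calc dist x y = √(∑ i, dist (x i) (y i) ^ 2) := EuclideanSpace.dist_eq x y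
    _ ≤ √(∑ _i : Fin d, t ^ 2) := by
      gcongr with i
      exact h i
    _ = √d * t := by simp [Real.sqrt_sq ht]

lemma corner_mem_cube (c : Fin d → ℝ) {l : ℝ} (hl : 0 ≤ l) : WithLp.toLp 2 c ∈ cube c l :=
  fun i ↦ by simp [hl]

lemma isCompact_cube (c : Fin d → ℝ) (l : ℝ) : IsCompact (cube c l) := by
  have preimage_Icc : cube c l =
      EuclideanSpace.equiv (Fin d) ℝ ⁻¹' Icc c (fun i ↦ c i + l) := by
    ext x
    exact forall_and
  rw [preimage_Icc]
  exact (EuclideanSpace.equiv (Fin d) ℝ).toHomeomorph.isCompact_preimage.2 isCompact_Icc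

lemma cube_injective {l : ℝ} (hl : 0 ≤ l) : Function.Injective fun c : Fin d → ℝ ↦ cube c l := by
  intro c c' (h : cube c l = cube c' l)
  have hc : WithLp.toLp 2 c ∈ cube c' l := h ▸ corner_mem_cube c hl
  have hc' : WithLp.toLp 2 c' ∈ cube c l := h.symm ▸ corner_mem_cube c' hl
  exact funext fun i ↦ le_antisymm (hc' i).1 (hc i).1

lemma dist_le_of_mem_cube {c : Fin d → ℝ} {l : ℝ} (hl : 0 ≤ l) {x y : EuclideanSpace ℝ (Fin d)}
    (hx : x ∈ cube c l) (hy : y ∈ cube c l) : dist x y ≤ √d * l :=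
  dist_le_sqrt_mul_of_forall_abs_sub_le hl fun i ↦
    abs_le.2 ⟨by linarith [(hx i).1, (hy i).2], by linarith [(hx i).2, (hy i).1]⟩

/-- The subcube with address `a` of the cube with lower corner `c` and side `l`, when the latter
is divided into `K ^ d` congruent subcubes. -/
def childCube (c : Fin d → ℝ) (l : ℝ) (K : ℕ) (a : Fin d → Fin K) :
    Set (EuclideanSpace ℝ (Fin d)) :=
  cube (childCorner c l K a) (l / K)

variable {c : Fin d → ℝ} {l : ℝ} {K : ℕ} {a b : Fin d → Fin K} {x y : EuclideanSpace ℝ (Fin d)}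

lemma childCube_injective (hl : 0 < l) (hK : 0 < K) : Function.Injective (childCube c l K) := by
  have hs : 0 < l / K := by positivity
  intro a b hab
  have hcorner := cube_injective hs.le hab
  funext i
  have hi : l / K * (a i : ℝ) = l / K * b i := add_left_cancel (congrFun hcorner i)
  exact Fin.ext (Nat.cast_injective (mul_left_cancel₀ hs.ne' hi))

lemma childCube_subset_cube (hl : 0 < l) : childCube c l K a ⊆ cube c l := fun x hx i ↦ by
  have hK : 0 < K := (a i).pos
  have hai : (a i : ℝ) + 1 ≤ K := by exact_mod_cast (a i).isLt
  obtain ⟨hlow, hupp⟩ : c i + l / K * a i ≤ x i ∧ x i ≤ c i + l / K * a i + l / K := hx i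
  have hs : 0 ≤ l / K * a i := by positivity
  have hle : l / K * (a i + 1) ≤ l := by
    calc l / K * (a i + 1) ≤ l / K * K := by gcongr
      _ = l := by field_simp
  exact ⟨by linarith, by linarith⟩

lemma sub_le_of_mem_childCube (hx : x ∈ childCube c l K a) (hy : y ∈ childCube c l K b)
    (i : Fin d) : y i - x i ≤ l / K * (b i - a i + 1) := by
  have hxi : c i + l / K * a i ≤ x i := (hx i).1
  have hyi : y i ≤ c i + l / K * b i + l / K := (hy i).2
  linarith

lemma le_sub_of_mem_childCube (hx : x ∈ childCube c l K a) (hy : y ∈ childCube c l K b)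
    (i : Fin d) : l / K * (b i - a i - 1) ≤ y i - x i := by
  linarith [sub_le_of_mem_childCube hy hx i]

namespace IsDetour

variable {a₀ : Fin d → Fin K} {g : (Fin d → Fin K) → Fin d → Fin K}

/-- Addresses at distance `1` have detours at distance at most `1 + 1 + 1`. -/
lemma dist_le (hg : IsDetour a₀ g) (hl : 0 ≤ l) (hab : ∀ i, |(a i : ℝ) - b i| ≤ 1)
    (hx : x ∈ childCube c l K (g a)) (hy : y ∈ childCube c l K (g b)) :
    dist x y ≤ √d * (4 * (l / K)) := by
  have : 0 ≤ l / K := by positivity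
  refine dist_le_sqrt_mul_of_forall_abs_sub_le (by positivity) fun i ↦ ?_
  have hgab : |(g a i : ℝ) - g b i| ≤ 3 := by
    have ha := abs_le.1 (hg.abs_sub_le_one a i)
    have hb := abs_le.1 (hg.abs_sub_le_one b i)
    have hi := abs_le.1 (hab i)
    exact abs_le.2 ⟨by linarith [ha.1, hb.2, hi.1], by linarith [ha.2, hb.1, hi.2]⟩
  have hxy := sub_le_of_mem_childCube hy hx i
  have hyx := sub_le_of_mem_childCube hx hy i
  have hupp : l / K * (g a i - g b i + 1) ≤ l / K * 4 := by
    gcongr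
    linarith [(abs_le.1 hgab).2]
  have hlow : l / K * (g b i - g a i + 1) ≤ l / K * 4 := by
    gcongr
    linarith [(abs_le.1 hgab).1]
  exact abs_le.2 ⟨by linarith, by linarith⟩

lemma half_le_dist (hg : IsDetour a₀ g) (hl : 0 ≤ l) (hK : 8 ≤ K) {i : Fin d}
    (ha : (a i : ℕ) = 0) (hb : (b i : ℕ) + 1 = K) (hx : x ∈ childCube c l K (g a))
    (hy : y ∈ childCube c l K (g b)) : l / 2 ≤ dist x y := by
  have hK' : (8 : ℝ) ≤ K := by exact_mod_cast hK
  have hga := (abs_le.1 (hg.abs_sub_le_one a i)).2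
  have hgb := (abs_le.1 (hg.abs_sub_le_one b i)).1
  have hb' : (b i : ℝ) + 1 = K := by exact_mod_cast hb
  rw [ha, Nat.cast_zero] at hga
  calc l / 2 = l / K * (K / 2) := by field_simp
    _ ≤ l / K * (g b i - g a i - 1) := by
      gcongr
      linarith
    _ ≤ y i - x i := le_sub_of_mem_childCube hx hy i
    _ ≤ dist (y i) (x i) := le_abs_self _
    _ ≤ dist x y := by
      rw [dist_comm x]
      exact PiLp.dist_apply_le y x i

end IsDetour

lemma isSpread_cube_inter [NeZero d] (hl : 0 < l) (hK : 8 ≤ K)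
    {a₀ : Fin d → Fin K} {F : Set (EuclideanSpace ℝ (Fin d))}
    (h : ∀ a, a ≠ a₀ → (childCube c l K a ∩ F).Nonempty) :
    IsSpread (l / 4) (cube c l ∩ F) := by
  obtain ⟨g, hg⟩ := exists_isDetour (by omega) a₀
  obtain ⟨x, hx, hxF⟩ := h _ (hg.ne fun _ ↦ ⟨0, by omega⟩)
  obtain ⟨z, hz, hzF⟩ := h _ (hg.ne fun _ ↦ ⟨K - 1, by omega⟩)
  have hxz : l / 2 ≤ dist x z :=
    hg.half_le_dist hl.le hK (i := 0) rfl (Nat.sub_add_cancel (by omega)) hx hz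
  exact isSpread_of_two_mul_le_dist ⟨childCube_subset_cube hl hx, hxF⟩
    ⟨childCube_subset_cube hl hz, hzF⟩ (by linarith)

end Cubes

/-- The constant with which the image of a subdivided cube is controlled by the sum of the images
of a line of subcubes: the first two factors compare the cube with the image of a line's end
points, the last one compares a step of the line with the subcube it starts in. -/
noncomputable def lineConst (η : ℝ → ℝ) (d : ℕ) : ℝ :=
  2 * η (2 * √d) * η (16 * √d)

section Subdivision

variable {d K : ℕ} {c : Fin d → ℝ} {l : ℝ} {a₀ : Fin d → Fin K}
  {F : Set (EuclideanSpace ℝ (Fin d))} {Y : Type*} [MetricSpace Y] {η : ℝ → ℝ}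
  {f : EuclideanSpace ℝ (Fin d) → Y}

namespace IsQSOn

lemma lineConst_nonneg (hf : IsQSOn η f F) (hη : MonotoneOn η (Ici 0)) (hF : F.Nontrivial) :
    0 ≤ lineConst η d := by
  have h (t : ℝ) (ht : 0 ≤ t) : 0 ≤ η (t * √d) := hf.nonneg hη hF (by positivity)
  exact mul_nonneg (mul_nonneg zero_le_two (h 2 zero_le_two)) (h 16 (by norm_num))

lemma diam_image_cube_le_mul_dist (hf : IsQSOn η f F) (hη : MonotoneOn η (Ici 0)) (hl : 0 < l)
    {x z : EuclideanSpace ℝ (Fin d)} (hx : x ∈ cube c l ∩ F) (hz : z ∈ F)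
    (hxz : l / 2 ≤ dist x z) :
    Metric.diam (f '' (cube c l ∩ F)) ≤ 2 * η (2 * √d) * dist (f x) (f z) := by
  have h := hf.diam_image_le_two_mul_dist hη inter_subset_right hx.2 hz (by positivity)
    (by positivity) hxz fun y hy ↦ dist_le_of_mem_cube hl.le hx.1 hy.1
  rwa [show √d * l / (l / 2) = 2 * √d by field_simp] at h

lemma dist_le_mul_diam_image_cube (hf : IsQSOn η f F) (hη : MonotoneOn η (Ici 0)) (hl : 0 < l)
    (hspread : IsSpread (l / 4) (cube c l ∩ F)) {x y : EuclideanSpace ℝ (Fin d)}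
    (hx : x ∈ cube c l ∩ F) (hy : y ∈ F) (hxy : dist x y ≤ √d * (4 * l)) :
    dist (f x) (f y) ≤ η (16 * √d) * Metric.diam (f '' (cube c l ∩ F)) := by
  have h := hf.dist_le_mul_diam_image hη inter_subset_right
    ((isCompact_cube c l).isBounded.subset inter_subset_left) (by positivity) hspread hx hy hxy
  rwa [show √d * (4 * l) / (l / 4) = 16 * √d by field_simp; norm_num] at h

lemma diam_image_cube_le_sum_line (hf : IsQSOn η f F) (hη : MonotoneOn η (Ici 0)) (hl : 0 < l)
    (hK : 8 ≤ K) {g : (Fin d → Fin K) → Fin d → Fin K} (hg : IsDetour a₀ g)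
    (hspread : ∀ a, a ≠ a₀ → IsSpread (l / K / 4) (childCube c l K a ∩ F))
    (i : Fin d) (a : Fin d → Fin K) :
    Metric.diam (f '' (cube c l ∩ F)) ≤ lineConst η d *
      ∑ j, Metric.diam (f '' (childCube c l K (g (Function.update a i j)) ∩ F)) := by
  have hs : 0 < l / K := by positivity
  choose p hp using fun b ↦ (hspread (g b) (hg.ne b)).nonempty
  let line (j : Fin K) : EuclideanSpace ℝ (Fin d) := p (Function.update a i j)
  let first : Fin K := ⟨0, by omega⟩
  let last : Fin K := ⟨K - 1, by omega⟩
  have hline (j : Fin K) : line j ∈ childCube c l K (g (Function.update a i j)) ∩ F := hp _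
  have ends_far : l / 2 ≤ dist (line first) (line last) :=
    hg.half_le_dist hl.le hK (i := i) (by simp [first]) (by simp [last]; omega)
      (hline first).1 (hline last).1
  have image_step_le (j k : Fin K) (hjk : (j : ℕ) + 1 = k) : dist (f (line j)) (f (line k)) ≤
      η (16 * √d) *
        Metric.diam (f '' (childCube c l K (g (Function.update a i j)) ∩ F)) := by
    refine hf.dist_le_mul_diam_image_cube hη hs (hspread _ (hg.ne _)) (hline j) (hline k).2
      (hg.dist_le hl.le (fun i' ↦ ?_) (hline j).1 (hline k).1)
    obtain rfl | hi' := eq_or_ne i' i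
    · simp [← hjk]
    · simp [hi']
  have hF : F.Nontrivial :=
    ⟨_, (hline first).2, _, (hline last).2, dist_pos.1 (ends_far.trans_lt' (by positivity))⟩
  have hη2 : 0 ≤ η (2 * √d) := hf.nonneg hη hF (by positivity)
  have hη16 : 0 ≤ η (16 * √d) := hf.nonneg hη hF (by positivity)
  calc Metric.diam (f '' (cube c l ∩ F))
      ≤ 2 * η (2 * √d) * dist (f (line first)) (f (line last)) :=
        hf.diam_image_cube_le_mul_dist hη hl
          ⟨childCube_subset_cube hl (hline first).1, (hline first).2⟩ (hline last).2 ends_far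
    _ ≤ 2 * η (2 * √d) * ∑ j, η (16 * √d) *
          Metric.diam (f '' (childCube c l K (g (Function.update a i j)) ∩ F)) := by
      gcongr
      exact dist_le_sum_of_dist_succ_le (q := fun j ↦ f (line j))
        (fun j ↦ mul_nonneg hη16 Metric.diam_nonneg) image_step_le (Nat.zero_le (K - 1))
    _ = _ := by
      rw [← Finset.mul_sum, lineConst]
      ring

lemma diam_image_childCube_le (hf : IsQSOn η f F) (hη : MonotoneOn η (Ici 0)) (hl : 0 < l)
    (hspread : IsSpread (l / 4) (cube c l ∩ F)) (a : Fin d → Fin K) :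
    Metric.diam (f '' (childCube c l K a ∩ F)) ≤
      η (4 * √d / K) * Metric.diam (f '' (cube c l ∩ F)) := by
  have hs : 0 ≤ l / K := by positivity
  have h := hf.diam_image_le_mul_diam_image hη
    (inter_subset_inter_left F (childCube_subset_cube (K := K) (a := a) hl)) inter_subset_right
    ((isCompact_cube c l).isBounded.subset inter_subset_left) (by positivity) (by positivity)
    hspread fun x hx y hy ↦ dist_le_of_mem_cube hs hx.1 hy.1
  rwa [show √d * (l / K) / (l / 4) = 4 * √d / K by field_simp] at h

lemma diam_image_cube_inter_pos (hf : IsQSOn η f F) (hη : MonotoneOn η (Ici 0)) {r : ℝ}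
    (hr : 0 < r) (hspread : IsSpread r (cube c l ∩ F)) :
    0 < Metric.diam (f '' (cube c l ∩ F)) :=
  hf.diam_image_pos hη inter_subset_right
    ((isCompact_cube c l).isBounded.subset inter_subset_left) (hspread.nontrivial hr)

lemma diam_image_cube_pow_le_mul_sum [NeZero d] (hf : IsQSOn η f F) (hη : MonotoneOn η (Ici 0))
    (hl : 0 < l) (hK : 8 ≤ K)
    (hspread : ∀ a, a ≠ a₀ → IsSpread (l / K / 4) (childCube c l K a ∩ F)) :
    Metric.diam (f '' (cube c l ∩ F)) ^ d ≤ 2 * lineConst η d ^ d *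
      ∑ a ∈ Finset.univ.erase a₀, Metric.diam (f '' (childCube c l K a ∩ F)) ^ d := by
  obtain ⟨g, hg⟩ := exists_isDetour (by omega) a₀
  have : Nonempty (Fin K) := ⟨⟨0, by omega⟩⟩
  have hF : F.Nontrivial :=
    ((hspread _ (hg.ne a₀)).nontrivial (by positivity)).mono inter_subset_right
  have hC : 0 ≤ lineConst η d := hf.lineConst_nonneg hη hF
  calc Metric.diam (f '' (cube c l ∩ F)) ^ d
      ≤ lineConst η d ^ d * ∑ a, Metric.diam (f '' (childCube c l K (g a) ∩ F)) ^ d := by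
        simpa only [Fintype.card_fin] using pow_card_le_mul_sum_pow_of_le_sum_update 0
          (G := fun a ↦ Metric.diam (f '' (childCube c l K (g a) ∩ F)))
          (fun _ ↦ Metric.diam_nonneg) Metric.diam_nonneg hC
          (hf.diam_image_cube_le_sum_line hη hl hK hg hspread 0)
    _ ≤ lineConst η d ^ d *
          (2 * ∑ a ∈ Finset.univ.erase a₀, Metric.diam (f '' (childCube c l K a ∩ F)) ^ d) := by
        gcongr
        exact hg.sum_comp_le (G := fun a ↦ Metric.diam (f '' (childCube c l K a ∩ F)) ^ d)
          fun a ↦ pow_nonneg Metric.diam_nonneg d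
    _ = _ := by ring

lemma diam_image_cube_rpow_le_sum [NeZero d] (hf : IsQSOn η f F) (hη : MonotoneOn η (Ici 0))
    (hl : 0 < l) (hK : 8 ≤ K) (hcube : IsSpread (l / 4) (cube c l ∩ F))
    (hspread : ∀ a, a ≠ a₀ → IsSpread (l / K / 4) (childCube c l K a ∩ F))
    {α : ℝ} (hα : α ≤ d)
    (hsmall : 2 * lineConst η d ^ d * η (4 * √d / K) ^ ((d : ℝ) - α) ≤ 1) :
    Metric.diam (f '' (cube c l ∩ F)) ^ α ≤
      ∑ a ∈ Finset.univ.erase a₀, Metric.diam (f '' (childCube c l K a ∩ F)) ^ α := by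
  have hF : F.Nontrivial := (hcube.nontrivial (by positivity)).mono inter_subset_right
  have hC : 0 ≤ lineConst η d := hf.lineConst_nonneg hη hF
  refine rpow_le_sum_rpow_of_le_mul_sum_rpow (γ := d)
    (hf.diam_image_cube_inter_pos hη (by positivity) hcube) (by positivity)
    (hf.nonneg hη hF (by positivity)) hα
    (fun a ha ↦ hf.diam_image_cube_inter_pos hη (by positivity)
      (hspread a (Finset.ne_of_mem_erase ha)))
    (fun a _ ↦ hf.diam_image_childCube_le hη hl hcube a) ?_ hsmall
  simpa only [Real.rpow_natCast] using hf.diam_image_cube_pow_le_mul_sum hη hl hK hspread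

end IsQSOn

end Subdivision

section Families

lemma nonempty_inter_iInter_sUnion {X : Type*} [TopologicalSpace X] [T2Space X]
    {𝓕 : ℕ → Set (Set X)} (hcompact : ∀ k, ∀ Q ∈ 𝓕 k, IsCompact Q)
    (hne : ∀ k, ∀ Q ∈ 𝓕 k, Q.Nonempty) (hanti : Antitone fun k ↦ ⋃₀ 𝓕 k)
    (hchild : ∀ k, ∀ Q ∈ 𝓕 k, ∃ Q' ∈ 𝓕 (k + 1), Q' ⊆ Q) {n : ℕ} {Q : Set X} (hQ : Q ∈ 𝓕 n) :
    (Q ∩ ⋂ k, ⋃₀ 𝓕 k).Nonempty := by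
  choose child child_mem child_subset using hchild
  let chain (k : ℕ) : {P // P ∈ 𝓕 (n + k)} :=
    Nat.rec ⟨Q, hQ⟩ (fun k P ↦ ⟨child (n + k) P.1 P.2, child_mem _ _ _⟩) k
  obtain ⟨x, hx⟩ := IsCompact.nonempty_iInter_of_sequence_nonempty_isCompact_isClosed
    (fun k ↦ (chain k).1) (fun k ↦ child_subset _ _ (chain k).2)
    (fun k ↦ hne _ _ (chain k).2) (hcompact _ _ (chain 0).2)
    fun k ↦ (hcompact _ _ (chain k).2).isClosed
  rw [mem_iInter] at hx
  exact ⟨x, hx 0, mem_iInter.2 fun k ↦ hanti (Nat.le_add_left k n) ⟨_, (chain k).2, hx k⟩⟩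

lemma fatSide_pos {N m : ℕ} (hK : 0 < N ^ m) (n : ℕ) : 0 < fatSide N m n := by
  have hK' : (0 : ℝ) < N ^ m := by exact_mod_cast hK
  rw [fatSide, pow_mul]
  positivity

lemma fatSide_succ (N m n : ℕ) : fatSide N m (n + 1) = fatSide N m n / (N ^ m : ℕ) := by
  rw [fatSide, fatSide, Nat.mul_succ, pow_add, mul_inv, div_eq_mul_inv, Nat.cast_pow]

namespace IsFatCantorFamilies

variable {d N m n : ℕ} {𝓕 : ℕ → Set (Set (EuclideanSpace ℝ (Fin d)))}
  {Q : Set (EuclideanSpace ℝ (Fin d))}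

lemma exists_corner (h𝓕 : IsFatCantorFamilies d N m 𝓕) (hQ : Q ∈ 𝓕 n) :
    ∃ (c : Fin d → ℝ) (a₀ : Fin d → Fin (N ^ m)), Q = cube c (fatSide N m n) ∧
      {Q' | Q' ∈ 𝓕 (n + 1) ∧ Q' ⊆ Q} = childCube c (fatSide N m n) (N ^ m) '' {a₀}ᶜ := by
  obtain ⟨c, hc, a₀, h⟩ := h𝓕.2.1 n Q hQ
  refine ⟨c, a₀, hc, h.trans ?_⟩
  ext Q'
  simp [childCube, fatSide_succ, eq_comm]

lemma antitone_sUnion (h𝓕 : IsFatCantorFamilies d N m 𝓕) : Antitone fun k ↦ ⋃₀ 𝓕 k :=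
  antitone_nat_of_succ_le fun k _ ⟨Q', hQ', hx⟩ ↦
    let ⟨Q, hQ, hsub⟩ := h𝓕.2.2 k Q' hQ'
    ⟨Q, hQ, hsub hx⟩

variable [NeZero d]

lemma exists_child (h𝓕 : IsFatCantorFamilies d N m 𝓕) (hK : 2 ≤ N ^ m) (hQ : Q ∈ 𝓕 n) :
    ∃ Q' ∈ 𝓕 (n + 1), Q' ⊆ Q := by
  obtain ⟨c, a₀, -, h⟩ := h𝓕.exists_corner hQ
  obtain ⟨g, hg⟩ := exists_isDetour hK a₀
  exact ⟨_, h.symm.subset (mem_image_of_mem _ (hg.ne a₀))⟩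

lemma inter_nonempty (h𝓕 : IsFatCantorFamilies d N m 𝓕) (hK : 2 ≤ N ^ m) (hQ : Q ∈ 𝓕 n) :
    (Q ∩ ⋂ k, ⋃₀ 𝓕 k).Nonempty := by
  refine nonempty_inter_iInter_sUnion (fun k P hP ↦ ?_) (fun k P hP ↦ ?_) h𝓕.antitone_sUnion
    (fun k P hP ↦ h𝓕.exists_child hK hP) hQ
  all_goals obtain ⟨c, -, rfl, -⟩ := h𝓕.exists_corner hP
  · exact isCompact_cube c _
  · exact ⟨_, corner_mem_cube c (fatSide_pos (by omega) k).le⟩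

lemma isSpread_inter (h𝓕 : IsFatCantorFamilies d N m 𝓕) (hK : 8 ≤ N ^ m) (hQ : Q ∈ 𝓕 n) :
    IsSpread (fatSide N m n / 4) (Q ∩ ⋂ k, ⋃₀ 𝓕 k) := by
  obtain ⟨c, a₀, rfl, h⟩ := h𝓕.exists_corner hQ
  refine isSpread_cube_inter (fatSide_pos (by omega) n) hK fun a (ha : a ∈ ({a₀}ᶜ : Set _)) ↦ ?_
  exact h𝓕.inter_nonempty (by omega) (h.symm.subset (mem_image_of_mem _ ha)).1

theorem diam_image_rpow_le_tsum (h𝓕 : IsFatCantorFamilies d N m 𝓕) (hK : 8 ≤ N ^ m)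
    {Y : Type*} [MetricSpace Y] {η : ℝ → ℝ} {f : EuclideanSpace ℝ (Fin d) → Y}
    (hf : IsQSOn η f (⋂ k, ⋃₀ 𝓕 k)) (hη : MonotoneOn η (Ici 0)) {α : ℝ} (hα : α ≤ d)
    (hsmall : 2 * lineConst η d ^ d * η (4 * √d / (N ^ m : ℕ)) ^ ((d : ℝ) - α) ≤ 1)
    (hQ : Q ∈ 𝓕 n) :
    Metric.diam (f '' (Q ∩ ⋂ k, ⋃₀ 𝓕 k)) ^ α ≤
      ∑' Q' : {Q' | Q' ∈ 𝓕 (n + 1) ∧ Q' ⊆ Q},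
        Metric.diam (f '' ((Q' : Set (EuclideanSpace ℝ (Fin d))) ∩ ⋂ k, ⋃₀ 𝓕 k)) ^ α := by
  have hspread := h𝓕.isSpread_inter hK hQ
  obtain ⟨c, a₀, rfl, h⟩ := h𝓕.exists_corner hQ
  have hl : 0 < fatSide N m n := fatSide_pos (by omega) n
  have hspread_child (a : Fin d → Fin (N ^ m)) (ha : a ∈ ({a₀}ᶜ : Set _)) :
      IsSpread (fatSide N m n / (N ^ m : ℕ) / 4)
        (childCube c (fatSide N m n) (N ^ m) a ∩ ⋂ k, ⋃₀ 𝓕 k) := by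
    rw [← fatSide_succ]
    exact h𝓕.isSpread_inter hK (h.symm.subset (mem_image_of_mem _ ha)).1
  rw [h, tsum_image_compl_singleton (childCube_injective hl (by omega)) a₀
    fun P ↦ Metric.diam (f '' (P ∩ ⋂ k, ⋃₀ 𝓕 k)) ^ α]
  exact hf.diam_image_cube_rpow_le_sum hη hl hK hspread hspread_child hα hsmall

end IsFatCantorFamilies

end Families

lemma eventually_mul_rpow_div_le_one {η : ℝ → ℝ} (hη : Tendsto η (𝓝[>] 0) (𝓝 0)) (B : ℝ)
    {c p : ℝ} (hc : 0 < c) (hp : 0 < p) : ∀ᶠ K : ℕ in atTop, B * η (c / K) ^ p ≤ 1 := by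
  have hdiv : Tendsto (fun K : ℕ ↦ c / K) atTop (𝓝[>] 0) :=
    tendsto_nhdsWithin_iff.2 ⟨tendsto_const_div_atTop_nhds_zero_nat c,
      (eventually_gt_atTop 0).mono fun K hK ↦ div_pos hc (Nat.cast_pos.2 hK)⟩
  have hlim := ((hη.comp hdiv).rpow_const_nhds_zero hp).const_mul B
  rw [mul_zero] at hlim
  exact hlim.eventually_le_const one_pos

namespace IsDistortion

variable {η : ℝ → ℝ}

lemma monotoneOn (hη : IsDistortion η) : MonotoneOn η (Ici 0) :=
  hη.2.1.monotoneOn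

lemma tendsto_nhdsGT_zero (hη : IsDistortion η) : Tendsto η (𝓝[>] 0) (𝓝 0) := by
  have h : Tendsto η (𝓝[Ici 0] 0) (𝓝 (η 0)) := hη.1 0 self_mem_Ici
  rw [hη.2.2.1] at h
  exact h.mono_left (nhdsWithin_mono 0 Ioi_subset_Ici_self)

end IsDistortion

theorem fatCantor_subadditivity_general
    (d N : ℕ) (hd : 1 ≤ d) (hN : 2 ≤ N) (η : ℝ → ℝ) (hη : MonotoneOn η (Ici 0))
    (hη0 : Tendsto η (𝓝[>] 0) (𝓝 0)) (α : ℝ) (hαd : α < d) :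
    ∃ m₀ : ℕ, ∀ m, m₀ ≤ m →
      ∀ 𝓕 : ℕ → Set (Set (EuclideanSpace ℝ (Fin d))), IsFatCantorFamilies d N m 𝓕 →
      ∀ (Y : Type*) [MetricSpace Y] (f : EuclideanSpace ℝ (Fin d) → Y),
        IsQSOn η f (⋂ k, ⋃₀ 𝓕 k) →
        ∀ n : ℕ, ∀ Q₀ ∈ 𝓕 n,
          Metric.diam (f '' (Q₀ ∩ ⋂ k, ⋃₀ 𝓕 k)) ^ α ≤
            ∑' Q : {Q' : Set (EuclideanSpace ℝ (Fin d)) // Q' ∈ 𝓕 (n + 1) ∧ Q' ⊆ Q₀},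
              Metric.diam (f '' ((Q : Set (EuclideanSpace ℝ (Fin d))) ∩ ⋂ k, ⋃₀ 𝓕 k)) ^ α := by
  have : NeZero d := ⟨by omega⟩
  have hlarge : ∀ᶠ m in atTop, 8 ≤ N ^ m ∧
      2 * lineConst η d ^ d * η (4 * √d / (N ^ m : ℕ)) ^ ((d : ℝ) - α) ≤ 1 :=
    (tendsto_pow_atTop_atTop_of_one_lt (by omega)).eventually <|
      (eventually_ge_atTop 8).and <| eventually_mul_rpow_div_le_one hη0 _
        (mul_pos four_pos (Real.sqrt_pos.2 (Nat.cast_pos.2 hd))) (sub_pos.2 hαd)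
  obtain ⟨m₀, hm₀⟩ := eventually_atTop.1 hlarge
  refine ⟨m₀, fun m hm 𝓕 h𝓕 Y _ f hf n Q₀ hQ₀ ↦ ?_⟩
  obtain ⟨hK, hsmall⟩ := hm₀ m hm
  exact h𝓕.diam_image_rpow_le_tsum hK hf hη hαd.le hsmall hQ₀

/-- For every distortion function `η` and `0 < α < d` there exists `m₀` such
that for every `m ≥ m₀`, every `(N,m)`-fat Cantor set `F` with construction families `𝓕`, every
`η`-quasisymmetry `f : F → Y`, every `n` and every `Q₀ ∈ 𝓕 n`,
`|f Q₀| ^ α ≤ ∑_{Q ∈ 𝓕 (n+1), Q ⊆ Q₀} |f Q| ^ α` (where `f Q` stands for `f (Q ∩ F)`). -/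
theorem fatCantor_subadditivity
    (d N : ℕ) (hd : 1 ≤ d) (hN : 2 ≤ N) (η : ℝ → ℝ) (hη : IsDistortion η)
    (α : ℝ) (hα0 : 0 < α) (hαd : α < d) :
    ∃ m₀ : ℕ, ∀ m, m₀ ≤ m →
      ∀ 𝓕 : ℕ → Set (Set (EuclideanSpace ℝ (Fin d))), IsFatCantorFamilies d N m 𝓕 →
      ∀ (Y : Type) [MetricSpace Y] (f : EuclideanSpace ℝ (Fin d) → Y),
        IsQSOn η f (⋂ k, ⋃₀ 𝓕 k) →
        ∀ n : ℕ, ∀ Q₀ ∈ 𝓕 n,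
          Metric.diam (f '' (Q₀ ∩ ⋂ k, ⋃₀ 𝓕 k)) ^ α ≤
            ∑' Q : {Q' : Set (EuclideanSpace ℝ (Fin d)) // Q' ∈ 𝓕 (n + 1) ∧ Q' ⊆ Q₀},
              Metric.diam (f '' ((Q : Set (EuclideanSpace ℝ (Fin d))) ∩ ⋂ k, ⋃₀ 𝓕 k)) ^ α :=
  fatCantor_subadditivity_general d N hd hN η hη.monotoneOn hη.tendsto_nhdsGT_zero α hαd
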